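/- Let F be a collection of real-valued 𝒜-measurable functions on Ω and define 𝒦(F) = {P ∈ M : P(|f|) < ∞ and P(f) = 0 for all f ∈ F}. If lim_{k→∞} sup_{P ∈ M} P(|f|·1(|f| > k)) = 0 for each f ∈ F, then 𝒦(F) is a compact subset of [0,1]^𝒜. -/

import Mathlib

open MeasureTheory Set ENNReal

namespace FATransport

variable {α : Type*} [MeasurableSpace α]

/-- The collection of measurable sets of `α` (the σ-field `𝒜`), as a type. -/
abbrev MSet (α : Type*) [MeasurableSpace α] := {A : Set α // MeasurableSet A}

/-- A finitely additive probability on the σ-field of `α`, viewed as an element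
of `[0,1]^𝒜`: it maps the whole space to `1` and is additive on disjoint pairs. -/
def IsFAP (P : MSet α → unitInterval) : Prop :=
  (P ⟨Set.univ, MeasurableSet.univ⟩ : ℝ) = 1 ∧
    ∀ A B : MSet α, Disjoint A.1 B.1 →
      (P ⟨A.1 ∪ B.1, A.2.union B.2⟩ : ℝ) = (P A : ℝ) + (P B : ℝ)

/-- `ℙ`, the set of all finitely additive probabilities on `𝒜`, as a subset of
`[0,1]^𝒜` (with its product topology). -/
def FAPs (α : Type*) [MeasurableSpace α] : Set (MSet α → unitInterval) :=
  {P | IsFAP P}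

/-- Integral of a simple function with respect to a finitely additive set function. -/
noncomputable def simpleInt (P : MSet α → unitInterval) (s : SimpleFunc α ℝ) : ℝ :=
  ∑ y ∈ s.range, y * (P ⟨(⇑s) ⁻¹' {y}, s.measurableSet_fiber y⟩ : ℝ)

/-- `P(f)` for a bounded measurable `f : α → ℝ`: the supremum of the integrals of
simple functions below `f` (for a f.a.p. `P` and bounded measurable `f` this agrees
with the integral defined by uniform approximation by simple functions). -/
noncomputable def fapInt (P : MSet α → unitInterval) (f : α → ℝ) : ℝ :=
  sSup (simpleInt P '' {s : SimpleFunc α ℝ | ∀ x, s x ≤ f x})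

/-- `P(c) = sup_k P(c ∧ k)` for a `[0,∞]`-valued `c`. -/
noncomputable def fapIntTop (P : MSet α → unitInterval) (c : α → ℝ≥0∞) : ℝ≥0∞ :=
  ⨆ k : ℕ, ENNReal.ofReal (fapInt P (fun x => (c x ⊓ (k : ℝ≥0∞)).toReal))

/-- A real-valued `f` is `P`-integrable iff `P(|f|) < ∞`. -/
def FapIntegrable (P : MSet α → unitInterval) (f : α → ℝ) : Prop :=
  fapIntTop P (fun x => ENNReal.ofReal |f x|) < ⊤

/-- `P(f) = P(f⁺) - P(f⁻)` for a (`P`-integrable) real-valued `f`. -/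
noncomputable def fapIntR (P : MSet α → unitInterval) (f : α → ℝ) : ℝ :=
  (fapIntTop P (fun x => ENNReal.ofReal (f x))).toReal -
    (fapIntTop P (fun x => ENNReal.ofReal (-f x))).toReal

/-- `P ≪ Q` for finitely additive probabilities. -/
def FapAC (P Q : MSet α → unitInterval) : Prop :=
  ∀ A : MSet α, (Q A : ℝ) = 0 → (P A : ℝ) = 0

variable {n : ℕ} {Ω : Fin n → Type*} [∀ i, MeasurableSpace (Ω i)]

/-- `M`, the set of finitely additive probabilities on `𝒜 = ⊗ᵢ 𝒜ᵢ` whose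
`i`-th marginal is `μ i` for every `i`. -/
def couplings (μ : ∀ i, Measure (Ω i)) : Set (MSet (∀ i, Ω i) → unitInterval) :=
  {P | IsFAP P ∧ ∀ (i : Fin n) (B : Set (Ω i)) (hB : MeasurableSet B),
    (P ⟨(fun ω => ω i) ⁻¹' B, (measurable_pi_apply i) hB⟩ : ℝ) = (μ i B).toReal}

end FATransport

namespace FATransport

section helpers

variable {α : Type*} [MeasurableSpace α]

open Classical in
noncomputable def opT (P : MSet α → unitInterval) (A : Set α) : ℝ →L[ℝ] ℝ :=
  if h : MeasurableSet A then (P ⟨A, h⟩ : ℝ) • ContinuousLinearMap.id ℝ ℝ else 0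

lemma opT_apply (P : MSet α → unitInterval) (A : Set α) (h : MeasurableSet A) (y : ℝ) :
    opT P A y = (P ⟨A, h⟩ : ℝ) * y := by
  simp [opT, h]

lemma simpleInt_eq (P : MSet α → unitInterval) (s : SimpleFunc α ℝ) :
    simpleInt P s = SimpleFunc.setToSimpleFunc (opT P) s := by
  unfold simpleInt SimpleFunc.setToSimpleFunc
  refine Finset.sum_congr rfl fun y _ => ?_
  rw [opT_apply P _ (s.measurableSet_fiber y), mul_comm]

lemma opT_add {P : MSet α → unitInterval} (hP : IsFAP P) :
    FinMeasAdditive (0 : Measure α) (opT P) := by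
  intro s t hs ht _ _ hd
  ext
  have := hP.2 ⟨s, hs⟩ ⟨t, ht⟩ hd
  simp only [ContinuousLinearMap.add_apply]
  rw [opT_apply P _ (hs.union ht), opT_apply P _ hs, opT_apply P _ ht]
  simpa using this

lemma int0 (s : SimpleFunc α ℝ) : Integrable s (0 : Measure α) := integrable_zero_measure

lemma simpleInt_add {P : MSet α → unitInterval} (hP : IsFAP P) (s t : SimpleFunc α ℝ) :
    simpleInt P (s + t) = simpleInt P s + simpleInt P t := by
  simp only [simpleInt_eq]
  exact SimpleFunc.setToSimpleFunc_add _ (opT_add hP) (int0 s) (int0 t)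

lemma simpleInt_const {P : MSet α → unitInterval} (hP : IsFAP P) (c : ℝ) :
    simpleInt P (SimpleFunc.const α c) = c := by
  rw [simpleInt_eq, SimpleFunc.setToSimpleFunc_const, opT_apply P _ MeasurableSet.univ, hP.1,
    one_mul]
  exact (opT_add hP).map_empty_eq_zero

lemma simpleInt_nonneg (P : MSet α → unitInterval) (s : SimpleFunc α ℝ) (h : ∀ x, 0 ≤ s x) :
    0 ≤ simpleInt P s := by
  unfold simpleInt
  refine Finset.sum_nonneg fun y hy => mul_nonneg ?_ (P _).2.1
  obtain ⟨x, rfl⟩ := SimpleFunc.mem_range.1 hy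
  exact h x

lemma simpleInt_mono {P : MSet α → unitInterval} (hP : IsFAP P) {s t : SimpleFunc α ℝ}
    (h : ∀ x, s x ≤ t x) : simpleInt P s ≤ simpleInt P t := by
  have h1 : t = s + (t - s) := by ext x; simp
  rw [h1, simpleInt_add hP]
  have := simpleInt_nonneg P (t - s) (fun x => by simpa using h x)
  linarith

lemma bdd {P : MSet α → unitInterval} (hP : IsFAP P) {g : α → ℝ} {C : ℝ} (hg : ∀ x, g x ≤ C) :
    BddAbove (simpleInt P '' {s : SimpleFunc α ℝ | ∀ x, s x ≤ g x}) := by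
  refine ⟨C, ?_⟩
  rintro _ ⟨s, hs, rfl⟩
  rw [← simpleInt_const hP C]
  exact simpleInt_mono hP fun x => (hs x).trans (hg x)

lemma le_fapInt {P : MSet α → unitInterval} (hP : IsFAP P) {g : α → ℝ} {C : ℝ}
    (hg : ∀ x, g x ≤ C) (s : SimpleFunc α ℝ) (hs : ∀ x, s x ≤ g x) :
    simpleInt P s ≤ fapInt P g :=
  le_csSup (bdd hP hg) ⟨s, hs, rfl⟩

lemma fapInt_le (P : MSet α → unitInterval) {g : α → ℝ} (hg : ∀ x, 0 ≤ g x) {a : ℝ}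
    (h : ∀ s : SimpleFunc α ℝ, (∀ x, s x ≤ g x) → simpleInt P s ≤ a) :
    fapInt P g ≤ a := by
  refine csSup_le ⟨_, SimpleFunc.const α 0, fun x => by simpa using hg x, rfl⟩ ?_
  rintro _ ⟨s, hs, rfl⟩
  exact h s hs

lemma exists_approx {g : α → ℝ} (hm : Measurable g) {C : ℝ} (h0 : ∀ x, 0 ≤ g x)
    (hg : ∀ x, g x ≤ C) {ε : ℝ} (hε : 0 < ε) :
    ∃ s : SimpleFunc α ℝ, (∀ x, s x ≤ g x) ∧ ∀ x, g x ≤ s x + ε := by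
  have hmeas : Measurable (fun x => ε * (⌊g x / ε⌋ : ℝ)) := by
    have h1 : Measurable (fun x => ⌊g x / ε⌋) := (hm.div_const ε).floor
    have h2 : Measurable (fun z : ℤ => ε * (z : ℝ)) := measurable_from_top
    exact h2.comp h1
  refine ⟨⟨fun x => ε * (⌊g x / ε⌋ : ℝ), fun y => hmeas (measurableSet_singleton y), ?_⟩, ?_, ?_⟩
  · refine ((Set.finite_Icc (0 : ℤ) ⌊C / ε⌋).image (fun z : ℤ => ε * (z : ℝ))).subset ?_
    rintro _ ⟨x, rfl⟩
    refine ⟨⌊g x / ε⌋, ⟨Int.floor_nonneg.2 (div_nonneg (h0 x) hε.le), Int.floor_le_floor ?_⟩, rfl⟩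
    exact div_le_div_of_nonneg_right (hg x) hε.le
  · intro x
    have := Int.floor_le (g x / ε)
    rw [le_div_iff₀ hε] at this
    change ε * (⌊g x / ε⌋ : ℝ) ≤ g x
    linarith
  · intro x
    have := (Int.lt_floor_add_one (g x / ε)).le
    rw [div_le_iff₀ hε] at this
    change g x ≤ ε * (⌊g x / ε⌋ : ℝ) + ε
    linarith

lemma fapInt_le_add {P : MSet α → unitInterval} (hP : IsFAP P) {g g' h : α → ℝ} {C D : ℝ}
    (hg : ∀ x, 0 ≤ g x) (hm : Measurable g') (h0 : ∀ x, 0 ≤ g' x) (hC : ∀ x, g' x ≤ C)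
    (hD : ∀ x, h x ≤ D) (hle : ∀ x, g x ≤ g' x + h x) :
    fapInt P g ≤ fapInt P g' + fapInt P h := by
  refine fapInt_le P hg fun r hr => le_of_forall_pos_le_add fun ε hε => ?_
  obtain ⟨s, hs1, hs2⟩ := exists_approx hm h0 hC hε
  have e : r = s + (SimpleFunc.const α ε + (r - s - SimpleFunc.const α ε)) := by
    ext x; simp
  have h1 := le_fapInt hP hC s hs1
  have h2 := le_fapInt hP hD (r - s - SimpleFunc.const α ε) (fun x => by
    have := hr x; have := hs2 x; have := hle x
    simp only [SimpleFunc.coe_sub, Pi.sub_apply, SimpleFunc.const_apply]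
    linarith)
  rw [e, simpleInt_add hP, simpleInt_add hP, simpleInt_const hP]
  linarith

lemma continuous_eval (A : MSet α) :
    Continuous fun P : MSet α → unitInterval => (P A : ℝ) :=
  continuous_subtype_val.comp (continuous_apply A)

lemma continuous_simpleInt (s : SimpleFunc α ℝ) :
    Continuous fun P : MSet α → unitInterval => simpleInt P s := by
  unfold simpleInt
  exact continuous_finsetSum _ fun y _ => continuous_const.mul (continuous_eval _)

lemma continuousOn_fapInt {g : α → ℝ} (hm : Measurable g) {C : ℝ} (h0 : ∀ x, 0 ≤ g x)
    (hg : ∀ x, g x ≤ C) : ContinuousOn (fun P => fapInt P g) (FAPs α) := by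
  choose s hs1 hs2 using fun k : ℕ =>
    exists_approx hm h0 hg (ε := 1 / ((k : ℝ) + 1)) Nat.one_div_pos_of_nat
  have : TendstoUniformlyOn (fun (k : ℕ) P => simpleInt P (s k)) (fun P => fapInt P g)
      Filter.atTop (FAPs α) := by
    rw [Metric.tendstoUniformlyOn_iff]
    intro ε hε
    have := (tendsto_one_div_add_atTop_nhds_zero_nat (𝕜 := ℝ)).eventually (gt_mem_nhds hε)
    filter_upwards [this] with k hk P hP
    have h1 := le_fapInt hP hg (s k) (hs1 k)
    have h2 : fapInt P g ≤ simpleInt P (s k) + 1 / ((k : ℝ) + 1) := by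
      refine fapInt_le P h0 fun r hr => ?_
      conv_rhs => rw [← simpleInt_const hP (1 / ((k : ℝ) + 1)), ← simpleInt_add hP]
      exact simpleInt_mono hP fun x => (hr x).trans (by simpa using hs2 k x)
    rw [Real.dist_eq, abs_lt]
    constructor <;> linarith
  exact this.continuousOn (Filter.Frequently.of_forall fun k => (continuous_simpleInt _).continuousOn)

lemma fapIntTop_le {P : MSet α → unitInterval} (hP : IsFAP P) {f g : α → ℝ}
    (hg : Measurable g) (hfg : ∀ x, g x ≤ |f x|) (K : ℕ) :
    fapIntTop P (fun x => ENNReal.ofReal (g x)) ≤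
      ENNReal.ofReal (fapInt P (fun x => (ENNReal.ofReal (g x) ⊓ (K : ℝ≥0∞)).toReal)) +
      fapIntTop P (fun x => if (K : ℝ) < |f x| then ENNReal.ofReal |f x| else 0) := by
  have fin : ∀ (a : ℝ≥0∞) (k : ℕ), a ⊓ (k : ℝ≥0∞) ≠ ⊤ := fun a k =>
    ne_top_of_le_ne_top (ENNReal.natCast_ne_top k) inf_le_right
  have bd : ∀ (a : ℝ≥0∞) (k : ℕ), (a ⊓ (k : ℝ≥0∞)).toReal ≤ k := fun a k => by
    simpa using ENNReal.toReal_mono (ENNReal.natCast_ne_top k) (inf_le_right (a := a))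
  refine iSup_le fun k => ?_
  refine le_trans ?_ (add_le_add le_rfl (le_iSup _ k))
  refine le_trans (ENNReal.ofReal_le_ofReal ?_) ENNReal.ofReal_add_le
  refine fapInt_le_add hP (C := K) (D := k) (fun x => ENNReal.toReal_nonneg) ?_
    (fun x => ENNReal.toReal_nonneg) (fun x => bd _ _) (fun x => bd _ _) (fun x => ?_)
  · exact (hg.ennreal_ofReal.inf measurable_const).ennreal_toReal
  · rw [← ENNReal.toReal_add (fin _ _) (fin _ _)]
    refine ENNReal.toReal_mono (ENNReal.add_ne_top.2 ⟨fin _ _, fin _ _⟩) ?_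
    beta_reduce
    split_ifs with h
    · exact le_add_left (inf_le_inf_right _ (ENNReal.ofReal_le_ofReal (hfg x)))
    · have : ENNReal.ofReal (g x) ≤ (K : ℝ≥0∞) := by
        rw [← ENNReal.ofReal_natCast]
        exact ENNReal.ofReal_le_ofReal ((hfg x).trans (not_lt.1 h))
      rw [inf_eq_left.2 this]
      exact le_add_right inf_le_left

lemma top_cont {M : Set (MSet α → unitInterval)} (hM : M ⊆ FAPs α) {f g : α → ℝ}
    (hg : Measurable g) (hfg : ∀ x, g x ≤ |f x|)
    (hUI : Filter.Tendsto
        (fun k : ℕ => ⨆ P ∈ M,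
          fapIntTop P (fun ω => if (k : ℝ) < |f ω| then ENNReal.ofReal |f ω| else 0))
        Filter.atTop (nhds 0)) :
    (∀ P ∈ M, fapIntTop P (fun x => ENNReal.ofReal (g x)) < ⊤) ∧
    ContinuousOn (fun P => (fapIntTop P (fun x => ENNReal.ofReal (g x))).toReal) M := by
  have key : ∀ ε : ℝ, 0 < ε → ∀ᶠ k : ℕ in Filter.atTop, ∀ P ∈ M,
      fapIntTop P (fun x => ENNReal.ofReal (g x)) ≤
      ENNReal.ofReal (fapInt P (fun x => (ENNReal.ofReal (g x) ⊓ (k : ℝ≥0∞)).toReal)) +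
      ENNReal.ofReal ε := by
    intro ε hε
    filter_upwards [hUI.eventually (gt_mem_nhds (ENNReal.ofReal_pos.2 hε))] with k hk P hP
    refine (fapIntTop_le (hM hP) hg hfg k).trans (add_le_add le_rfl (le_trans ?_ hk.le))
    exact le_iSup₂ (f := fun P (_ : P ∈ M) => fapIntTop P
      (fun ω => if (k : ℝ) < |f ω| then ENNReal.ofReal |f ω| else 0)) P hP
  have fin : ∀ P ∈ M, fapIntTop P (fun x => ENNReal.ofReal (g x)) < ⊤ := by
    intro P hP
    obtain ⟨k, hk⟩ := (key 1 one_pos).exists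
    exact (hk P hP).trans_lt (ENNReal.add_lt_top.2 ⟨ENNReal.ofReal_lt_top, ENNReal.ofReal_lt_top⟩)
  refine ⟨fin, ?_⟩
  have bd : ∀ (a : ℝ≥0∞) (k : ℕ), (a ⊓ (k : ℝ≥0∞)).toReal ≤ k := fun a k => by
    simpa using ENNReal.toReal_mono (ENNReal.natCast_ne_top k) (inf_le_right (a := a))
  have : TendstoUniformlyOn (fun (k : ℕ) P =>
      fapInt P (fun x => (ENNReal.ofReal (g x) ⊓ (k : ℝ≥0∞)).toReal))
      (fun P => (fapIntTop P (fun x => ENNReal.ofReal (g x))).toReal)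
      Filter.atTop M := by
    rw [Metric.tendstoUniformlyOn_iff]
    intro ε hε
    filter_upwards [key (ε / 2) (half_pos hε)] with k hk P hP
    have hnn : 0 ≤ fapInt P (fun x => (ENNReal.ofReal (g x) ⊓ (k : ℝ≥0∞)).toReal) := by
      have := le_fapInt (hM hP) (fun x => bd (ENNReal.ofReal (g x)) k) (SimpleFunc.const α 0)
        (fun x => by simp)
      rwa [simpleInt_const (hM hP)] at this
    have h1 := ENNReal.toReal_mono (by finiteness) (hk P hP)
    rw [ENNReal.toReal_add (by finiteness) (by finiteness), ENNReal.toReal_ofReal hnn,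
      ENNReal.toReal_ofReal (half_pos hε).le] at h1
    have h2 : fapInt P (fun x => (ENNReal.ofReal (g x) ⊓ (k : ℝ≥0∞)).toReal) ≤
        (fapIntTop P (fun x => ENNReal.ofReal (g x))).toReal := by
      rw [← ENNReal.ofReal_le_iff_le_toReal (fin P hP).ne]
      exact le_iSup (fun k : ℕ => ENNReal.ofReal
        (fapInt P (fun x => (ENNReal.ofReal (g x) ⊓ (k : ℝ≥0∞)).toReal))) k
    rw [Real.dist_eq, abs_lt]
    constructor <;> linarith
  refine this.continuousOn (Filter.Frequently.of_forall fun k => ?_)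
  refine (continuousOn_fapInt (C := k) ?_ (fun x => ENNReal.toReal_nonneg)
    (fun x => bd _ _)).mono hM
  exact (hg.ennreal_ofReal.inf measurable_const).ennreal_toReal

lemma isClosed_couplings {n : ℕ} {Ω : Fin n → Type*} [∀ i, MeasurableSpace (Ω i)]
    (μ : ∀ i, Measure (Ω i)) : IsClosed (couplings μ) := by
  unfold couplings IsFAP
  simp only [Set.setOf_and, Set.setOf_forall]
  refine ((isClosed_eq (continuous_eval _) continuous_const).inter ?_).inter ?_
  · exact isClosed_iInter fun A => isClosed_iInter fun B => isClosed_iInter fun _ =>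
      isClosed_eq (continuous_eval _) ((continuous_eval _).add (continuous_eval _))
  · exact isClosed_iInter fun i => isClosed_iInter fun B => isClosed_iInter fun _ =>
      isClosed_eq (continuous_eval _) continuous_const

end helpers

/-- if `F` is a collection of real-valued measurable functions on `Ω`
such that `lim_k sup_{P ∈ M} P(|f|·1(|f|>k)) = 0` for each `f ∈ F`, then
`𝒦(F) = {P ∈ M : P(|f|) < ∞ and P(f) = 0 for all f ∈ F}` is compact. -/
theorem kF_compact
    {n : ℕ} (hn : 0 < n) {Ω : Fin n → Type*} [∀ i, MeasurableSpace (Ω i)]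
    (μ : ∀ i, Measure (Ω i)) [∀ i, IsProbabilityMeasure (μ i)]
    (F : Set ((∀ i, Ω i) → ℝ)) (hF : ∀ f ∈ F, Measurable f)
    (hUI : ∀ f ∈ F,
      Filter.Tendsto
        (fun k : ℕ => ⨆ P ∈ couplings μ,
          fapIntTop P (fun ω => if (k : ℝ) < |f ω| then ENNReal.ofReal |f ω| else 0))
        Filter.atTop (nhds 0)) :
    IsCompact {P ∈ couplings μ | ∀ f ∈ F, FapIntegrable P f ∧ fapIntR P f = 0} := by
  have hM : couplings μ ⊆ FAPs (∀ i, Ω i) := fun P hP => hP.1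
  have hcl := isClosed_couplings μ
  have e : {P ∈ couplings μ | ∀ f ∈ F, FapIntegrable P f ∧ fapIntR P f = 0} =
      couplings μ ∩ ⋂ f ∈ F, (couplings μ ∩ (fun P => fapIntR P f) ⁻¹' {0}) := by
    ext P
    simp only [Set.mem_setOf_eq, Set.mem_inter_iff, Set.mem_iInter, Set.mem_preimage,
      Set.mem_singleton_iff]
    refine and_congr_right fun hP => forall₂_congr fun f hf => and_congr_left fun _ => ?_
    exact ⟨fun _ => hP, fun _ => (top_cont hM (g := fun x => |f x|)
      (continuous_abs.measurable.comp (hF f hf)) (fun _ => le_rfl) (hUI f hf)).1 P hP⟩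
  rw [e]
  refine (hcl.inter (isClosed_biInter fun f hf => ?_)).isCompact
  refine ContinuousOn.preimage_isClosed_of_isClosed ?_ hcl isClosed_singleton
  exact (top_cont hM (hF f hf) (fun x => le_abs_self _) (hUI f hf)).2.sub
    (top_cont hM (hF f hf).neg (fun x => neg_le_abs _) (hUI f hf)).2

end FATransport
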